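/- arXiv:2101.02589 — 7 statements merged into one kernel-verified Lean document; each statement's English description precedes it below -/
import Mathlib

section
/- Let P ⊆ ℝ^n be a convex set, let φ : P → ℝ be convex, let x₀ ∈ P, set m := φ(x₀), and let a, b ∈ ℝ with m < a < b. Then the sublevel set {x ∈ P : φ(x) ≤ b} is contained in the dilated set x₀ + ((b−m)/(a−m)) · ({x ∈ P : φ(x) ≤ a} − x₀), where for a set S ⊆ ℝ^n and λ > 0, x₀ + λ·(S − x₀) denotes {x₀ + λ(s − x₀) : s ∈ S}. -/
open MeasureTheory Set

/-- Sublevel set inclusion under dilation about a point, for a convex function. -/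
theorem stmt_2 (n : ℕ) (P : Set (Fin n → ℝ)) (hcv : Convex ℝ P)
    (φ : (Fin n → ℝ) → ℝ) (hφ : ConvexOn ℝ P φ)
    (x₀ : Fin n → ℝ) (hx₀ : x₀ ∈ P) (a b : ℝ) (ha : φ x₀ < a) (hab : a < b) :
    {x ∈ P | φ x ≤ b} ⊆
      (fun s => x₀ + ((b - φ x₀) / (a - φ x₀)) • (s - x₀)) '' {x ∈ P | φ x ≤ a} := by
  rintro x ⟨hxP, hxb⟩
  have ham : 0 < a - φ x₀ := sub_pos.2 ha
  have hbm : 0 < b - φ x₀ := by linarith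
  -- `t` is the inverse of the dilation factor, so the preimage of `x` is `(1 - t) x₀ + t x`;
  -- it lies on the segment from `x₀` to `x`, and convexity bounds `φ` there by `(1 - t) m + t b = a`.
  obtain ⟨t, ht⟩ : ∃ t, t = (a - φ x₀) / (b - φ x₀) := ⟨_, rfl⟩
  have ht0 : 0 ≤ t := by rw [ht]; positivity
  have ht1 : t ≤ 1 := by rw [ht, div_le_one hbm]; linarith
  have htb : t * (b - φ x₀) = a - φ x₀ := by rw [ht]; field_simp
  have hlt : (b - φ x₀) / (a - φ x₀) * t = 1 := by rw [ht]; field_simp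
  refine ⟨(1 - t) • x₀ + t • x,
    ⟨hcv hx₀ hxP (sub_nonneg.2 ht1) ht0 (sub_add_cancel 1 t), ?_⟩, ?_⟩
  · have h := hφ.2 hx₀ hxP (sub_nonneg.2 ht1) ht0 (sub_add_cancel 1 t)
    simp only [smul_eq_mul] at h
    have hmul := mul_le_mul_of_nonneg_left hxb ht0
    linarith
  · have hs : (1 - t) • x₀ + t • x - x₀ = t • (x - x₀) := by module
    simp only [hs, smul_smul, hlt, one_smul, add_sub_cancel]
end

section
/- Let n ≥ 1, let P ⊆ ℝ^n be a nonempty bounded open convex set, let φ : P → ℝ be convex, and set m := inf_P φ (which is finite). Then for all a, b ∈ ℝ with m < a < b one has μ(P_b) ≤ ((b − m)/(a − m))^n · μ(P_a), where P_c := {x ∈ P : φ(x) ≤ c} and μ is Lebesgue measure on ℝ^n. -/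
open MeasureTheory Set

/-!
For `m < s < a` pick `y ∈ P` with `φ y < s`. With `t = (a - s) / (b - s)`, convexity shows that the
homothety of centre `y` and ratio `t` maps `P_b` into `P_a`, since `(1 - t) * s + t * b = a`; hence
`t ^ n * μ(P_b) ≤ μ(P_a)` (`volume_sublevel_le_of_lt`). Letting `s` decrease to `m` gives the
theorem; the limit is needed because `m` need not be attained on the open set `P`.
-/

/-- The growth bound with the infimum replaced by any level `s` lying strictly above a value
of `φ`. -/
lemma volume_sublevel_le_of_lt {n : ℕ} {P : Set (Fin n → ℝ)} {φ : (Fin n → ℝ) → ℝ}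
    (hφ : ConvexOn ℝ P φ) {a b s : ℝ} (hsa : s < a) (hab : a < b)
    {y : Fin n → ℝ} (hy : y ∈ P) (hys : φ y < s) :
    volume {x ∈ P | φ x ≤ b} ≤
      ENNReal.ofReal (((b - s) / (a - s)) ^ n) * volume {x ∈ P | φ x ≤ a} := by
  have h1 : 0 < a - s := sub_pos.2 hsa
  have h2 : 0 < b - s := by linarith
  set t := (a - s) / (b - s) with ht
  have ht0 : 0 < t := div_pos h1 h2
  have ht1 : t ≤ 1 := (div_le_one h2).2 (by linarith)
  have htb : t * (b - s) = a - s := div_mul_cancel₀ _ h2.ne'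
  have hsub : AffineMap.homothety y t '' {x ∈ P | φ x ≤ b} ⊆ {x ∈ P | φ x ≤ a} := by
    rintro _ ⟨x, ⟨hx, hxb⟩, rfl⟩
    have he : AffineMap.homothety y t x = (1 - t) • y + t • x := by
      simp only [AffineMap.homothety_apply, vsub_eq_sub, vadd_eq_add]
      module
    have hsum : 1 - t + t = 1 := by ring
    rw [he]
    refine ⟨hφ.1 hy hx (sub_nonneg.2 ht1) ht0.le hsum, ?_⟩
    have h := hφ.2 hy hx (sub_nonneg.2 ht1) ht0.le hsum
    simp only [smul_eq_mul] at h
    have h3 := mul_le_mul_of_nonneg_left hys.le (sub_nonneg.2 ht1)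
    have h4 := mul_le_mul_of_nonneg_left hxb ht0.le
    linarith
  have hvol := measure_mono (μ := volume) hsub
  rw [Measure.addHaar_image_homothety, Module.finrank_fin_fun,
    abs_of_pos (pow_pos ht0 n)] at hvol
  have hinv : ((b - s) / (a - s)) ^ n * t ^ n = 1 := by
    rw [← mul_pow, ht, div_mul_div_cancel₀ h1.ne', div_self h2.ne', one_pow]
  calc volume {x ∈ P | φ x ≤ b}
      = ENNReal.ofReal (((b - s) / (a - s)) ^ n) *
          (ENNReal.ofReal (t ^ n) * volume {x ∈ P | φ x ≤ b}) := by
        rw [← mul_assoc, ← ENNReal.ofReal_mul (by positivity), hinv, ENNReal.ofReal_one, one_mul]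
    _ ≤ _ := by gcongr

/-- Volume growth of sublevel sets of a convex function on a bounded open convex set:
`μ(P_b) ≤ ((b - m)/(a - m))^n μ(P_a)` for `m = inf_P φ < a < b`. -/
theorem stmt_3 (n : ℕ) (hn : 1 ≤ n) (P : Set (Fin n → ℝ))
    (hne : P.Nonempty) (hbd : Bornology.IsBounded P) (hop : IsOpen P) (hcv : Convex ℝ P)
    (φ : (Fin n → ℝ) → ℝ) (hφ : ConvexOn ℝ P φ)
    (a b : ℝ) (ha : sInf (φ '' P) < a) (hab : a < b) :
    volume {x ∈ P | φ x ≤ b} ≤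
      ENNReal.ofReal (((b - sInf (φ '' P)) / (a - sInf (φ '' P))) ^ n) *
        volume {x ∈ P | φ x ≤ a} := by
  set m := sInf (φ '' P) with hm
  have h1 : 0 < a - m := sub_pos.2 ha
  have h2 : 0 < b - m := by linarith
  have hcont : ContinuousAt (fun s : ℝ => ((b - s) / (a - s)) ^ n) m :=
    ((continuousAt_const.sub continuousAt_id).div
      (continuousAt_const.sub continuousAt_id) h1.ne').pow n
  have hlim : Filter.Tendsto
      (fun s : ℝ => ENNReal.ofReal (((b - s) / (a - s)) ^ n) * volume {x ∈ P | φ x ≤ a})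
      (nhdsWithin m (Ioi m))
      (nhds (ENNReal.ofReal (((b - m) / (a - m)) ^ n) * volume {x ∈ P | φ x ≤ a})) := by
    refine ENNReal.Tendsto.mul_const
      (ENNReal.tendsto_ofReal (hcont.tendsto.mono_left nhdsWithin_le_nhds)) (Or.inl ?_)
    exact (ENNReal.ofReal_pos.2 (by positivity)).ne'
  refine ge_of_tendsto hlim ?_
  filter_upwards [Ioo_mem_nhdsGT ha] with s hs
  obtain ⟨_, ⟨y, hy, rfl⟩, hys⟩ := exists_lt_of_csInf_lt (hne.image φ) hs.1
  exact volume_sublevel_le_of_lt hφ hs.2 hab hy hys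
end

section
/- Let n ≥ 1, let P ⊆ ℝ^n be a nonempty bounded open convex set, and let φ : P → ℝ be a convex function that is Lebesgue-integrable on P with ∫_P φ dμ = 0 and inf_P φ = −1. Then ∫_P |φ| dμ ≥ (2/(n+1)) · μ(P_−), where P_− := {x ∈ P : φ(x) ≤ 0}. -/
open MeasureTheory Set

/-!
Since `∫_P φ = 0`, the integral of `|φ|` over `P` is that of `|φ| - φ`, which is `-2φ` on
`A = P_-` and `0` elsewhere. So it suffices that `∫_A (-φ) ≥ μ(A) / (n+1)`.

Let `x₀` be a point with `φ x₀ ≤ -a`, `0 < a < 1`. By convexity of `φ`, the homothety with centre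
`x₀` and ratio `1 - t` maps `A` into `{x ∈ A | -φ x ≥ t a}`, so this superlevel set has measure at
least `(1-t)^n μ(A)`. The layer-cake formula and `∫₀¹ (1-t)^n dt = 1/(n+1)` give
`∫_A (-φ) ≥ a μ(A) / (n+1)` (`integral_neg_sublevel_ge`), and `a` tends to `1`.
-/

lemma lintegral_one_sub_pow (n : ℕ) :
    ∫⁻ t in Ioc (0 : ℝ) 1, ENNReal.ofReal ((1 - t) ^ n) = ENNReal.ofReal (1 / (n + 1 : ℝ)) := by
  rw [← ofReal_integral_eq_lintegral_ofReal]
  · rw [← intervalIntegral.integral_of_le zero_le_one,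
      intervalIntegral.integral_comp_sub_left (fun x : ℝ => x ^ n) 1]
    simp
  · exact (Continuous.integrableOn_Icc (by fun_prop)).mono_set Ioc_subset_Icc_self
  · filter_upwards [ae_restrict_mem measurableSet_Ioc] with t ht
    exact pow_nonneg (by linarith [ht.2]) n

/-- The homothety with ratio `1 - t` centred at a point where `φ ≤ -a` maps the sublevel set
`{φ ≤ 0}` into its part where `t ≤ -φ / a`. -/
lemma volume_superlevel_ge {n : ℕ} {P : Set (Fin n → ℝ)} {φ : (Fin n → ℝ) → ℝ}
    (hφ : ConvexOn ℝ P φ) {a : ℝ} (ha : 0 < a) {x₀ : Fin n → ℝ} (hx₀ : x₀ ∈ P)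
    (hxa : φ x₀ ≤ -a) {t : ℝ} (ht : t ∈ Ioc (0 : ℝ) 1) :
    ENNReal.ofReal ((1 - t) ^ n) * volume {x ∈ P | φ x ≤ 0} ≤
      volume ({x | t ≤ -φ x / a} ∩ {x ∈ P | φ x ≤ 0}) := by
  have h := Measure.addHaar_image_homothety (volume : Measure (Fin n → ℝ)) x₀ (1 - t)
    {x ∈ P | φ x ≤ 0}
  have h1 : 0 ≤ 1 - t := by linarith [ht.2]
  rw [Module.finrank_fin_fun, abs_of_nonneg (pow_nonneg h1 n)] at h
  rw [← h]
  apply measure_mono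
  rintro _ ⟨y, ⟨hyP, hy⟩, rfl⟩
  have e : AffineMap.homothety x₀ (1 - t) y = t • x₀ + (1 - t) • y := by
    simp only [AffineMap.homothety_apply, vsub_eq_sub, vadd_eq_add]
    module
  rw [e]
  have hc := hφ.2 hx₀ hyP ht.1.le h1 (by ring)
  simp only [smul_eq_mul] at hc
  have h2 : t * φ x₀ ≤ t * -a := mul_le_mul_of_nonneg_left hxa ht.1.le
  have h3 : (1 - t) * φ y ≤ 0 := mul_nonpos_of_nonneg_of_nonpos h1 hy
  have h4 : 0 < t * a := mul_pos ht.1 ha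
  refine ⟨?_, hφ.1 hx₀ hyP ht.1.le h1 (by ring), by linarith⟩
  rw [mem_setOf_eq, le_div_iff₀ ha]
  linarith

lemma integral_neg_sublevel_ge {n : ℕ} {P : Set (Fin n → ℝ)} {φ : (Fin n → ℝ) → ℝ}
    (hφ : ConvexOn ℝ P φ) (hm : MeasurableSet {x ∈ P | φ x ≤ 0})
    (hint : IntegrableOn φ {x ∈ P | φ x ≤ 0} volume)
    {a : ℝ} (ha : 0 < a) {x₀ : Fin n → ℝ} (hx₀ : x₀ ∈ P) (hxa : φ x₀ ≤ -a) :
    a * ((volume {x ∈ P | φ x ≤ 0}).toReal / (n + 1)) ≤ ∫ x in {x ∈ P | φ x ≤ 0}, -φ x := by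
  set A := {x ∈ P | φ x ≤ 0} with hA
  have hfi : Integrable (fun x => -φ x / a) (volume.restrict A) := hint.neg.div_const a
  have hf0 : 0 ≤ᵐ[volume.restrict A] fun x => -φ x / a := by
    filter_upwards [ae_restrict_mem hm] with x hx
    exact div_nonneg (by linarith [hx.2]) ha.le
  have key : ENNReal.ofReal (1 / (n + 1 : ℝ)) * volume A ≤
      ENNReal.ofReal (∫ x in A, -φ x / a) := by
    rw [ofReal_integral_eq_lintegral_ofReal hfi hf0,
      lintegral_eq_lintegral_meas_le _ hf0 hfi.aemeasurable, ← lintegral_one_sub_pow,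
      ← lintegral_mul_const _ (by fun_prop)]
    refine le_trans (setLIntegral_mono' measurableSet_Ioc fun t ht => ?_)
      (lintegral_mono_set Ioc_subset_Ioi_self)
    rw [Measure.restrict_apply' hm]
    exact volume_superlevel_ge hφ ha hx₀ hxa ht
  have hI0 : 0 ≤ ∫ x in A, -φ x / a := integral_nonneg_of_ae hf0
  have k2 := ENNReal.toReal_mono ENNReal.ofReal_ne_top key
  rw [ENNReal.toReal_mul, ENNReal.toReal_ofReal (by positivity), ENNReal.toReal_ofReal hI0,
    integral_div, le_div_iff₀ ha] at k2
  calc _ = 1 / (n + 1 : ℝ) * (volume A).toReal * a := by ring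
    _ ≤ _ := k2

/-- Lower bound `∫_P |φ| ≥ (2/(n+1)) μ(P_-)` for a centered convex function with
`inf_P φ = -1`, where `P_- = {φ ≤ 0}`. -/
theorem stmt_4 (n : ℕ) (hn : 1 ≤ n) (P : Set (Fin n → ℝ))
    (hne : P.Nonempty) (hbd : Bornology.IsBounded P) (hop : IsOpen P) (hcv : Convex ℝ P)
    (φ : (Fin n → ℝ) → ℝ) (hφ : ConvexOn ℝ P φ)
    (hint : IntegrableOn φ P volume)
    (hzero : (∫ x in P, φ x) = 0)
    (hinf : sInf (φ '' P) = -1) :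
    (∫ x in P, |φ x|) ≥ (2 / (n + 1 : ℝ)) * (volume {x ∈ P | φ x ≤ 0}).toReal := by
  have hm : MeasurableSet {x ∈ P | φ x ≤ 0} := by
    have h : IsOpen (P ∩ φ ⁻¹' Ioi 0) :=
      (hφ.continuousOn hop).isOpen_inter_preimage hop isOpen_Ioi
    convert hop.measurableSet.diff h.measurableSet using 1
    ext x
    simp only [mem_setOf_eq, mem_diff, mem_inter_iff, mem_preimage, mem_Ioi, not_and, not_lt]
    tauto
  set A := {x ∈ P | φ x ≤ 0} with hA
  have hAP : A ⊆ P := fun x hx => hx.1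
  have hintA : IntegrableOn φ A volume := hint.mono_set hAP
  have hstep : ∀ a : ℝ, 0 < a → a < 1 →
      a * ((volume A).toReal / (n + 1)) ≤ ∫ x in A, -φ x := by
    intro a ha ha1
    obtain ⟨_, ⟨x₀, hx₀, rfl⟩, hlt⟩ :=
      exists_lt_of_csInf_lt (b := -a) (hne.image φ) (by rw [hinf]; linarith)
    exact integral_neg_sublevel_ge hφ hm hintA ha hx₀ hlt.le
  have hI : (volume A).toReal / (n + 1) ≤ ∫ x in A, -φ x := by
    have hI0 : 0 ≤ ∫ x in A, -φ x := setIntegral_nonneg hm fun x hx => by linarith [hx.2]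
    by_contra! hlt
    set M := (volume A).toReal / (n + 1 : ℝ)
    set I := ∫ x in A, -φ x
    have hM : 0 < M := hI0.trans_lt hlt
    -- The ratio `a` is chosen so that `a * M` is the midpoint of `I` and `M`.
    have h := hstep ((I + M) / (2 * M)) (by positivity) (by rw [div_lt_one (by positivity)]; linarith)
    have e : (I + M) / (2 * M) * M = (I + M) / 2 := by field_simp
    linarith
  have hsub : ∫ x in P, |φ x| = ∫ x in P, (|φ x| - φ x) := by
    rw [integral_sub hint.abs hint, hzero, sub_zero]
  have hmono : ∫ x in A, (|φ x| - φ x) ≤ ∫ x in P, (|φ x| - φ x) :=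
    setIntegral_mono_set (hint.abs.sub hint)
      (Filter.Eventually.of_forall fun x => sub_nonneg.2 (le_abs_self _)) hAP.eventuallyLE
  have hAeq : ∫ x in A, (|φ x| - φ x) = 2 * ∫ x in A, -φ x := by
    rw [← integral_const_mul]
    refine setIntegral_congr_fun hm fun x hx => ?_
    simp only [abs_of_nonpos hx.2]
    ring
  have e : 2 / (n + 1 : ℝ) * (volume A).toReal = 2 * ((volume A).toReal / (n + 1)) := by ring
  rw [ge_iff_le, e, hsub]
  linarith
end

section
/- Let n ≥ 1, let P ⊆ ℝ^n be a nonempty bounded open convex set, and let φ : P → ℝ be a convex function that is Lebesgue-integrable on P with ∫_P φ dμ = 0 and inf_P φ = −1. Then for every b > 0 one has ∫_{P_+} φ dμ ≥ b·μ(P) − (((b+1)^{n+1} − 1)/(n+1)) · μ(P_−), where P_+ := {x ∈ P : φ(x) > 0} and P_− := {x ∈ P : φ(x) ≤ 0}. -/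
/-!
Write `V t = μ {x ∈ P | φ x ≤ t}`. If `φ x₀ ≤ -m` with `m > 0`, the homothety with centre `x₀` and
ratio `m / (m + t)` maps `{φ ≤ t}` into `{φ ≤ 0}` by convexity, so `m ^ n * V t ≤ (m + t) ^ n * V 0`
(`sublevel_scaling`). As `inf φ = -1`, letting `m → 1` gives `V t ≤ (1 + t) ^ n * V 0`
(`sublevel_growth`). The layer-cake formula for `min φ⁺ b` then yields
`∫_{P_+} φ ≥ ∫₀ᵇ (μ P - V t) dt ≥ b μ P - V 0 ∫₀ᵇ (1 + t) ^ n dt`, which is the claim.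
-/

open MeasureTheory Set

lemma sublevel_scaling {n : ℕ} {P : Set (Fin n → ℝ)} (hbd : Bornology.IsBounded P)
    {φ : (Fin n → ℝ) → ℝ} (hφ : ConvexOn ℝ P φ) {x₀ : Fin n → ℝ} (hx₀ : x₀ ∈ P) {m t : ℝ}
    (hm : 0 < m) (ht : 0 ≤ t) (hx : φ x₀ ≤ -m) :
    m ^ n * volume.real {x ∈ P | φ x ≤ t} ≤ (m + t) ^ n * volume.real {x ∈ P | φ x ≤ 0} := by
  have hmt : 0 < m + t := by linarith
  set r : ℝ := m / (m + t) with hr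
  have hr0 : 0 < r := div_pos hm hmt
  have hr1 : 0 ≤ 1 - r := by
    rw [hr, sub_nonneg, div_le_one hmt]; linarith
  have hsub : AffineMap.homothety x₀ r '' {x ∈ P | φ x ≤ t} ⊆ {x ∈ P | φ x ≤ 0} := by
    rintro _ ⟨x, ⟨hxP, hxt⟩, rfl⟩
    have he : AffineMap.homothety x₀ r x = (1 - r) • x₀ + r • x := by
      simp only [AffineMap.homothety_apply, vsub_eq_sub, vadd_eq_add]
      module
    rw [he]
    refine ⟨hφ.1 hx₀ hxP hr1 hr0.le (by ring), ?_⟩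
    have h1 := hφ.2 hx₀ hxP hr1 hr0.le (by ring)
    have h2 : (1 - r) * φ x₀ ≤ (1 - r) * (-m) := mul_le_mul_of_nonneg_left hx hr1
    have h3 : r * φ x ≤ r * t := mul_le_mul_of_nonneg_left hxt hr0.le
    have h4 : (1 - r) * (-m) + r * t = 0 := by
      rw [hr]; field_simp; ring
    simp only [smul_eq_mul] at h1
    linarith
  have hfin : volume {x ∈ P | φ x ≤ 0} ≠ ⊤ :=
    (hbd.subset (sep_subset _ _)).measure_lt_top.ne
  have h := measureReal_mono hsub hfin
  rw [measureReal_def, Measure.addHaar_image_homothety, ENNReal.toReal_mul,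
    ENNReal.toReal_ofReal (abs_nonneg _), Module.finrank_fin_fun, abs_of_pos (pow_pos hr0 n),
    ← measureReal_def, hr, div_pow, div_mul_eq_mul_div, div_le_iff₀ (pow_pos hmt n)] at h
  linarith

lemma sublevel_growth {n : ℕ} {P : Set (Fin n → ℝ)}
    (hne : P.Nonempty) (hbd : Bornology.IsBounded P)
    {φ : (Fin n → ℝ) → ℝ} (hφ : ConvexOn ℝ P φ) (hinf : sInf (φ '' P) = -1) {t : ℝ} (ht : 0 ≤ t) :
    volume.real {x ∈ P | φ x ≤ t} ≤ (1 + t) ^ n * volume.real {x ∈ P | φ x ≤ 0} := by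
  have key : ∀ m ∈ Ioo (0 : ℝ) 1,
      m ^ n * volume.real {x ∈ P | φ x ≤ t} ≤ (m + t) ^ n * volume.real {x ∈ P | φ x ≤ 0} := by
    rintro m ⟨hm0, hm1⟩
    obtain ⟨_, ⟨x₀, hx₀, rfl⟩, hlt⟩ := exists_lt_of_csInf_lt (hne.image φ)
      (show sInf (φ '' P) < -m by rw [hinf]; linarith)
    exact sublevel_scaling hbd hφ hx₀ hm0 ht hlt.le
  have hcl : (1 : ℝ) ∈ closure (Ioo (0 : ℝ) 1) := by
    rw [closure_Ioo zero_ne_one]; simp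
  have h := le_on_closure key (by fun_prop) (by fun_prop) hcl
  simpa using h

/-- For a centered convex function with `inf_P φ = -1` and any `b > 0`:
`∫_{P_+} φ ≥ b μ(P) - (((b+1)^{n+1} - 1)/(n+1)) μ(P_-)`. -/
theorem stmt_5 (n : ℕ) (hn : 1 ≤ n) (P : Set (Fin n → ℝ))
    (hne : P.Nonempty) (hbd : Bornology.IsBounded P) (hop : IsOpen P) (hcv : Convex ℝ P)
    (φ : (Fin n → ℝ) → ℝ) (hφ : ConvexOn ℝ P φ)
    (hint : IntegrableOn φ P volume)
    (hzero : (∫ x in P, φ x) = 0)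
    (hinf : sInf (φ '' P) = -1) :
    ∀ b : ℝ, 0 < b →
      (∫ x in {x ∈ P | 0 < φ x}, φ x) ≥
        b * (volume P).toReal -
          (((b + 1) ^ (n + 1) - 1) / (n + 1 : ℝ)) * (volume {x ∈ P | φ x ≤ 0}).toReal := by
  intro b hb
  have : IsFiniteMeasure (volume.restrict P) := ⟨by simpa using hbd.measure_lt_top⟩
  have hcont : ContinuousOn φ P := hφ.continuousOn hop
  have hPp : IsOpen {x ∈ P | 0 < φ x} := hcont.isOpen_inter_preimage hop isOpen_Ioi
  have hpos : Integrable (fun x => max (φ x) 0) (volume.restrict P) := hint.pos_part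
  have hf : Integrable (fun x => min (max (φ x) 0) b) (volume.restrict P) :=
    hpos.inf (integrable_const b)
  have hplus : ∫ x in {x ∈ P | 0 < φ x}, φ x = ∫ x in P, max (φ x) 0 := by
    rw [← integral_indicator hPp.measurableSet, ← integral_indicator hop.measurableSet]
    congr 1
    ext x
    by_cases hx : x ∈ P
    · by_cases h0 : 0 < φ x
      · simp [indicator, hx, h0, h0.le]
      · simp [indicator, hx, h0, not_lt.1 h0]
    · simp [indicator, hx]
  have hmono : ∫ x in P, min (max (φ x) 0) b ≤ ∫ x in P, max (φ x) 0 :=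
    integral_mono hf hpos fun x => min_le_left _ _
  have hlayer := hf.integral_eq_integral_Ioc_meas_le (M := b)
    (Filter.Eventually.of_forall fun x => le_min (le_max_right _ _) hb.le)
    (Filter.Eventually.of_forall fun x => min_le_right _ _)
  have hanti : Antitone fun t : ℝ =>
      (volume.restrict P).real {x | t ≤ min (max (φ x) 0) b} := fun s t hst =>
    measureReal_mono fun x hx => le_trans hst hx
  have hlow : ∫ t in Ioc 0 b, (volume.real P - (1 + t) ^ n * volume.real {x ∈ P | φ x ≤ 0})
      ≤ ∫ t in Ioc 0 b, (volume.restrict P).real {x | t ≤ min (max (φ x) 0) b} := by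
    refine setIntegral_mono_on ?_ ?_ measurableSet_Ioc ?_
    · exact (Continuous.integrableOn_Icc (by fun_prop)).mono_set Ioc_subset_Icc_self
    · exact (hanti.antitoneOn _).integrableOn_isCompact isCompact_Icc |>.mono_set Ioc_subset_Icc_self
    · rintro t ⟨ht0, htb⟩
      have hg := sublevel_growth hne hbd hφ hinf ht0.le
      have hcover : P ⊆ ({x | t ≤ min (max (φ x) 0) b} ∩ P) ∪ {x ∈ P | φ x ≤ t} := by
        intro x hx
        rcases le_total (φ x) t with h | h
        · exact Or.inr ⟨hx, h⟩
        · exact Or.inl ⟨le_min (le_max_of_le_left h) htb, hx⟩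
      have h1 : volume.real P ≤ _ := (measureReal_mono hcover
        ((hbd.subset (union_subset inter_subset_right (sep_subset _ _))).measure_lt_top.ne)).trans
        (measureReal_union_le _ _)
      rw [measureReal_restrict_apply' hop.measurableSet]
      linarith
  have hcalc : ∫ t in Ioc 0 b, (volume.real P - (1 + t) ^ n * volume.real {x ∈ P | φ x ≤ 0})
      = b * volume.real P
        - (((b + 1) ^ (n + 1) - 1) / (n + 1 : ℝ)) * volume.real {x ∈ P | φ x ≤ 0} := by
    rw [← intervalIntegral.integral_of_le hb.le, intervalIntegral.integral_sub
      (by simp) (Continuous.intervalIntegrable (by fun_prop) _ _),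
      intervalIntegral.integral_mul_const,
      intervalIntegral.integral_comp_add_left (fun t : ℝ => t ^ n) 1, integral_pow]
    simp [add_comm]
  rw [← measureReal_def, ← measureReal_def, ge_iff_le, ← hcalc, hplus]
  exact hlow.trans (hlayer.symm.le.trans hmono)
end

section
/- Let n ≥ 1 and let P := {x ∈ ℝ^n : x_i > 0 for all i, and x_1 + … + x_n < (n+1)/n}, the interior of the simplex with vertices 0 and ((n+1)/n)e_i for 1 ≤ i ≤ n. Define φ : P → ℝ by φ(x) = −1 + x_1 + … + x_n. Then φ is convex, inf_P φ = −1, ∫_P φ dμ = 0, and (1/μ(P)) ∫_P |φ| dμ = (2/(n+1))·(n/(n+1))^n. In particular, the lower bound in the inequality (2/(n+1))·(n/(n+1))^n·(−inf_P φ) ≤ (1/μ(P))∫_P |φ| dμ is attained. -/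
open MeasureTheory Set

/-!
Write `S c` for the open simplex `{x | 0 < xᵢ, ∑ xᵢ < c}`, so that `P = S ((n+1)/n)`. Scaling gives
`μ (S c) = c ^ n * μ (S 1)`, and the layer-cake formula then gives
`∫_{S c} (c - ∑ xᵢ) = ∫₀ᶜ μ (S (c - t)) dt = c ^ (n+1) / (n+1) * μ (S 1)`.

With `c = (n+1)/n` this yields `∫_P φ = 0`. Moreover `|φ| = φ + 2 φ⁻`, and `φ⁻` restricted to `P`
is `1 - ∑ xᵢ` on `S 1` and zero elsewhere, so `∫_P |φ| = 2 / (n+1) * μ (S 1)`. The volume `μ (S 1)`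
is positive and finite and cancels in the average; its value is not needed.
-/

/-- The open simplex with vertices `0` and `c eᵢ`. -/
def openSimplex (n : ℕ) (c : ℝ) : Set (Fin n → ℝ) :=
  {x | (∀ i, 0 < x i) ∧ ∑ i, x i < c}

lemma openSimplex_isOpen (n : ℕ) (c : ℝ) : IsOpen (openSimplex n c) := by
  have h : openSimplex n c = (⋂ i, {x : Fin n → ℝ | 0 < x i}) ∩ {x | ∑ i, x i < c} := by
    ext x; simp [openSimplex]
  rw [h]
  exact (isOpen_iInter_of_finite fun i => isOpen_lt continuous_const (continuous_apply i)).inter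
    (isOpen_lt (by fun_prop) continuous_const)

lemma openSimplex_convex (n : ℕ) (c : ℝ) : Convex ℝ (openSimplex n c) := by
  have h : openSimplex n c = (⋂ i, {x : Fin n → ℝ | 0 < x i}) ∩ {x | ∑ i, x i < c} := by
    ext x; simp [openSimplex]
  rw [h]
  refine (convex_iInter fun i => ?_).inter ?_
  · exact convex_halfSpace_gt (LinearMap.proj (R := ℝ) (φ := fun _ : Fin n => ℝ) i).isLinear 0
  · refine convex_halfSpace_lt (f := fun x : Fin n → ℝ => ∑ i, x i) ⟨?_, ?_⟩ c
    · intro x y; simp [Finset.sum_add_distrib]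
    · intro a x; simp [Finset.mul_sum]

lemma openSimplex_subset_Icc (n : ℕ) (c : ℝ) :
    openSimplex n c ⊆ Icc (fun _ => 0) (fun _ => c) := by
  rintro x ⟨h0, h1⟩
  refine ⟨fun i => (h0 i).le, fun i => ?_⟩
  exact (Finset.single_le_sum (fun j _ => (h0 j).le) (Finset.mem_univ i)).trans h1.le

lemma openSimplex_volume_ne_top (n : ℕ) (c : ℝ) : volume (openSimplex n c) ≠ ⊤ :=
  measure_ne_top_of_subset (openSimplex_subset_Icc n c) isCompact_Icc.measure_lt_top.ne

lemma openSimplex_integrableOn (n : ℕ) (c : ℝ) {f : (Fin n → ℝ) → ℝ} (hf : Continuous f) :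
    IntegrableOn f (openSimplex n c) :=
  (hf.continuousOn.integrableOn_compact isCompact_Icc).mono_set (openSimplex_subset_Icc n c)

lemma openSimplex_eq_empty {n : ℕ} {c : ℝ} (hc : c ≤ 0) : openSimplex n c = ∅ := by
  refine eq_empty_of_forall_notMem ?_
  rintro x ⟨h0, h1⟩
  exact absurd (Finset.sum_nonneg fun i (_ : i ∈ Finset.univ) => (h0 i).le) (by linarith)

lemma const_mem_openSimplex {n : ℕ} (hn : 1 ≤ n) {c d : ℝ} (hd : 0 < d) (hdc : d < c) :
    (fun _ => d / n) ∈ openSimplex n c := by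
  have hn' : (0 : ℝ) < n := by exact_mod_cast hn
  refine ⟨fun i => by positivity, ?_⟩
  simp only [Finset.sum_const, Finset.card_univ, Fintype.card_fin, nsmul_eq_mul]
  rwa [mul_div_cancel₀ _ hn'.ne']

lemma openSimplex_volume_pos {n : ℕ} (hn : 1 ≤ n) : 0 < volume.real (openSimplex n 1) := by
  refine ENNReal.toReal_pos ?_ (openSimplex_volume_ne_top n 1)
  exact ((openSimplex_isOpen n 1).measure_pos volume
    ⟨_, const_mem_openSimplex hn (d := 1 / 2) (by norm_num) (by norm_num)⟩).ne'

lemma openSimplex_volume (n : ℕ) {c : ℝ} (hc : 0 < c) :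
    volume.real (openSimplex n c) = c ^ n * volume.real (openSimplex n 1) := by
  open scoped Pointwise in
  have h : openSimplex n c = c • openSimplex n 1 := by
    ext x
    rw [mem_smul_set_iff_inv_smul_mem₀ hc.ne']
    simp only [openSimplex, mem_ofPred_eq, Pi.smul_apply, smul_eq_mul, ← Finset.mul_sum]
    refine and_congr (forall_congr' fun i => ?_) ?_
    · rw [mul_pos_iff_of_pos_left (inv_pos.2 hc)]
    · rw [inv_mul_lt_iff₀ hc, mul_one]
  rw [h, measureReal_def, Measure.addHaar_smul, ENNReal.toReal_mul, measureReal_def]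
  simp [abs_of_pos hc, hc.le]

/-- The layer-cake formula applied to the height function `c - ∑ xᵢ`, whose superlevel sets in
the simplex are smaller simplices. -/
lemma integral_sub_sum {n : ℕ} {c : ℝ} (hc : 0 < c) :
    ∫ x in openSimplex n c, (c - ∑ i, x i) =
      c ^ (n + 1) / (n + 1) * volume.real (openSimplex n 1) := by
  have hmeas := (openSimplex_isOpen n c).measurableSet
  have hint : IntegrableOn (fun x : Fin n → ℝ => c - ∑ i, x i) (openSimplex n c) :=
    openSimplex_integrableOn n c (by fun_prop)
  rw [hint.integral_eq_integral_meas_lt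
    ((ae_restrict_iff' hmeas).2 (.of_forall fun x hx => by simpa using hx.2.le))]
  have hlevel : ∀ t ∈ Ioi (0 : ℝ),
      (volume.restrict (openSimplex n c)).real {x | t < c - ∑ i, x i} =
        (Ioo 0 c).indicator (fun t => (c - t) ^ n * volume.real (openSimplex n 1)) t := by
    intro t ht
    have ht : 0 < t := ht
    have hset : {x | t < c - ∑ i, x i} ∩ openSimplex n c = openSimplex n (c - t) := by
      ext x
      simp only [openSimplex, mem_inter_iff, mem_ofPred_eq]
      constructor
      · rintro ⟨h1, h2, -⟩; exact ⟨h2, by linarith⟩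
      · rintro ⟨h1, h2⟩; exact ⟨by linarith, h1, by linarith⟩
    rw [measureReal_restrict_apply' hmeas, hset]
    by_cases h : t < c
    · rw [indicator_of_mem (show t ∈ Ioo 0 c from ⟨ht, h⟩), openSimplex_volume n (sub_pos.2 h)]
    · rw [indicator_of_notMem (fun h' => h h'.2), openSimplex_eq_empty (by linarith)]
      simp
  rw [setIntegral_congr_fun measurableSet_Ioi hlevel, setIntegral_indicator measurableSet_Ioo,
    inter_eq_right.2 Ioo_subset_Ioi_self, ← integral_Ioc_eq_integral_Ioo,
    ← intervalIntegral.integral_of_le hc.le, intervalIntegral.integral_mul_const,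
    intervalIntegral.integral_comp_sub_left (fun t => t ^ n), integral_pow]
  simp

/-- The extremal example: on the open simplex `P` with vertices `0` and `((n+1)/n) eᵢ`,
the function `φ(x) = -1 + x₁ + ⋯ + xₙ` is convex, has infimum `-1`, integrates to zero,
and attains the lower bound `(2/(n+1)) (n/(n+1))^n` in the sharp inequality. -/
theorem stmt_6 (n : ℕ) (hn : 1 ≤ n)
    (P : Set (Fin n → ℝ))
    (hP : P = {x | (∀ i, 0 < x i) ∧ ∑ i, x i < (n + 1 : ℝ) / n})
    (φ : (Fin n → ℝ) → ℝ)
    (hφdef : φ = fun x => -1 + ∑ i, x i) :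
    ConvexOn ℝ P φ ∧ sInf (φ '' P) = -1 ∧ (∫ x in P, φ x) = 0 ∧
      (1 / (volume P).toReal) * (∫ x in P, |φ x|) =
        (2 / (n + 1 : ℝ)) * ((n : ℝ) / (n + 1)) ^ n := by
  have hn' : (0 : ℝ) < n := by exact_mod_cast hn
  set c : ℝ := (n + 1 : ℝ) / n with hc
  have hc1 : 1 < c := by rw [hc, lt_div_iff₀ hn']; linarith
  have hc0 : 0 < c := by linarith
  change P = openSimplex n c at hP
  have hV := openSimplex_volume_pos hn
  have hvol := openSimplex_volume n hc0
  have hφ : Continuous φ := by rw [hφdef]; fun_prop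
  have hzero : ∫ x in P, φ x = 0 := by
    have h1 : ∀ x, φ x = (c - 1) - (c - ∑ i, x i) := fun x => by rw [hφdef]; ring
    simp_rw [h1, hP]
    rw [integral_sub (openSimplex_integrableOn n c (by fun_prop))
      (openSimplex_integrableOn n c (by fun_prop)), integral_sub_sum hc0, setIntegral_const,
      hvol, smul_eq_mul, pow_succ]
    have h2 : c - 1 = c / (n + 1) := by rw [hc]; field_simp; ring
    rw [h2]; ring
  have habs : ∫ x in P, |φ x| = 2 / (n + 1) * volume.real (openSimplex n 1) := by
    have hsub : openSimplex n 1 ⊆ P := by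
      rw [hP]; exact fun x hx => ⟨hx.1, hx.2.trans hc1⟩
    have h1 : ∀ x ∈ P, |φ x| =
        φ x + 2 * (openSimplex n 1).indicator (fun x => 1 - ∑ i, x i) x := by
      intro x hx
      rw [hP] at hx
      by_cases h : ∑ i, x i < 1
      · rw [indicator_of_mem (show x ∈ openSimplex n 1 from ⟨hx.1, h⟩), hφdef,
          abs_of_neg (by linarith)]
        ring
      · rw [indicator_of_notMem (fun h' => h h'.2), hφdef, abs_of_nonneg (by linarith)]
        ring
    have hS := (openSimplex_isOpen n 1).measurableSet
    have hPm : MeasurableSet P := hP ▸ (openSimplex_isOpen n c).measurableSet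
    have hi : IntegrableOn ((openSimplex n 1).indicator fun x => 1 - ∑ i, x i) P :=
      ((openSimplex_integrableOn n 1 (by fun_prop)).integrable_indicator hS).integrableOn
    rw [setIntegral_congr_fun hPm h1, integral_add
      (hP ▸ openSimplex_integrableOn n c hφ) (hi.const_mul 2), hzero, integral_const_mul,
      setIntegral_indicator hS, inter_eq_right.2 hsub, integral_sub_sum one_pos]
    rw [one_pow]; ring
  refine ⟨?_, ?_, hzero, ?_⟩
  · refine ⟨hP ▸ openSimplex_convex n c, fun x _ y _ a b _ _ hab => le_of_eq ?_⟩
    rw [hφdef]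
    simp only [Pi.add_apply, Pi.smul_apply, smul_eq_mul, Finset.sum_add_distrib, ← Finset.mul_sum]
    linear_combination hab
  · refine IsGLB.csInf_eq ⟨?_, fun b hb => ?_⟩
      ⟨_, mem_image_of_mem φ (hP ▸ const_mem_openSimplex hn one_pos hc1)⟩
    · rintro _ ⟨x, hx, rfl⟩
      rw [hP] at hx
      have := Finset.sum_nonneg fun i (_ : i ∈ Finset.univ) => (hx.1 i).le
      rw [hφdef]; linarith
    · by_contra! h
      -- The point with coordinate sum `d` has `φ = d - 1`, which is below `b` for small `d`.
      obtain ⟨d, hd0, hd⟩ := exists_between (show 0 < min c (b + 1) from lt_min hc0 (by linarith))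
      have h2 := hb (mem_image_of_mem φ
        (hP ▸ const_mem_openSimplex hn hd0 (hd.trans_le (min_le_left _ _))))
      have h3 := hd.trans_le (min_le_right _ _)
      rw [hφdef] at h2
      simp only [Finset.sum_const, Finset.card_univ, Fintype.card_fin, nsmul_eq_mul] at h2
      rw [mul_div_cancel₀ _ hn'.ne'] at h2
      linarith
  · rw [habs, ← measureReal_def, hP, hvol]
    have h1 : (n : ℝ) / (n + 1) = c⁻¹ := by rw [hc, inv_div]
    rw [h1, inv_pow]
    field_simp
end

section
/- Let n ≥ 1 and m ≥ 1 be integers, and define φ_{n,m} : (0,1)^n → ℝ by φ_{n,m}(x_1, …, x_n) = φ_m(x_1), where φ_m(x) = max(2m − 1 − 2m²x, −1). Then φ_{n,m} is convex on (0,1)^n, inf_{(0,1)^n} φ_{n,m} = −1, ∫_{(0,1)^n} φ_{n,m} dμ = 0, and ∫_{(0,1)^n} |φ_{n,m}| dμ ≥ 2 − 2/m. -/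
/-!
The function depends on the first coordinate only, and the first coordinate of a uniform point of
the cube is uniform on `(0,1)` (`integral_cube_eq`), so both integrals are one-dimensional.  There,
`φ_m` equals the affine function `2m - 1 - 2m²x` on `[0, 1/m]`, with integral `1 - 1/m`, and equals
`-1` on `[1/m, 1]`, with integral `-(1 - 1/m)`; hence the total is `0`.  For the absolute value,
`|φ_m| ≥ φ_m` on the first interval and `|φ_m| = 1` on the second give the bound `2(1 - 1/m)`.
Convexity holds because `φ_m` is a maximum of affine functions, and the infimum `-1` is
approached as `x₁ → 1` (for `m = 1` it is not attained in the open cube).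
-/

open MeasureTheory Set

/-- Integrating a function of one coordinate over the unit cube reduces to an interval integral. -/
lemma integral_cube_eq (n : ℕ) (i : Fin n) (f : ℝ → ℝ) (hf : Continuous f) :
    (∫ x in Set.univ.pi fun _ : Fin n => Set.Ioo (0 : ℝ) 1, f (x i)) = ∫ t in (0 : ℝ)..1, f t := by
  have : IsProbabilityMeasure (volume.restrict (Ioo (0 : ℝ) 1)) := ⟨by simp⟩
  have hmp := measurePreserving_eval (fun _ : Fin n => volume.restrict (Ioo (0 : ℝ) 1)) i
  rw [volume_pi, Measure.restrict_pi_pi, intervalIntegral.integral_of_le zero_le_one,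
    integral_Ioc_eq_integral_Ioo]
  have h := integral_map hmp.aemeasurable (f := f) hf.aestronglyMeasurable
  rw [hmp.map_eq] at h
  exact h.symm

lemma integral_affine_piece (m : ℝ) (hm : 1 ≤ m) :
    ∫ t in (0 : ℝ)..(1 / m), (2 * m - 1 - 2 * m ^ 2 * t) = 1 - 1 / m := by
  have h0 : m ≠ 0 := by positivity
  rw [intervalIntegral.integral_sub (by simp) (Continuous.intervalIntegrable (by fun_prop) _ _),
    intervalIntegral.integral_const_mul, integral_id, intervalIntegral.integral_const, smul_eq_mul]
  field_simp
  ring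

/-- To the left of `1/m` the affine branch of the maximum is the larger one. -/
lemma max_eq_affine {m t : ℝ} (hm : 1 ≤ m) (ht : t ≤ 1 / m) :
    max (2 * m - 1 - 2 * m ^ 2 * t) (-1) = 2 * m - 1 - 2 * m ^ 2 * t := by
  rw [le_div_iff₀ (by positivity)] at ht
  apply max_eq_left
  nlinarith

lemma max_eq_neg_one {m t : ℝ} (hm : 1 ≤ m) (ht : 1 / m ≤ t) :
    max (2 * m - 1 - 2 * m ^ 2 * t) (-1) = -1 := by
  rw [div_le_iff₀ (by positivity)] at ht
  apply max_eq_right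
  nlinarith

lemma integral_max_eq_zero (m : ℝ) (hm : 1 ≤ m) :
    ∫ t in (0 : ℝ)..1, max (2 * m - 1 - 2 * m ^ 2 * t) (-1) = 0 := by
  have hc : Continuous fun t : ℝ => max (2 * m - 1 - 2 * m ^ 2 * t) (-1) := by fun_prop
  have h0 : 0 ≤ 1 / m := by positivity
  have h1 : 1 / m ≤ 1 := by rw [div_le_one (by positivity)]; exact hm
  have hleft : ∫ t in (0 : ℝ)..(1 / m), max (2 * m - 1 - 2 * m ^ 2 * t) (-1) = 1 - 1 / m := by
    rw [← integral_affine_piece m hm]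
    refine intervalIntegral.integral_congr fun t ht => ?_
    rw [uIcc_of_le h0] at ht
    exact max_eq_affine hm ht.2
  have hright : ∫ t in (1 / m)..1, max (2 * m - 1 - 2 * m ^ 2 * t) (-1) = -(1 - 1 / m) := by
    have : ∫ _ in (1 / m)..1, (-1 : ℝ) = -(1 - 1 / m) := by
      rw [intervalIntegral.integral_const, smul_eq_mul]; ring
    rw [← this]
    refine intervalIntegral.integral_congr fun t ht => ?_
    rw [uIcc_of_le h1] at ht
    exact max_eq_neg_one hm ht.1
  rw [← intervalIntegral.integral_add_adjacent_intervals (hc.intervalIntegrable 0 (1 / m))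
    (hc.intervalIntegrable (1 / m) 1), hleft, hright]
  ring

lemma le_integral_abs_max (m : ℝ) (hm : 1 ≤ m) :
    2 - 2 / m ≤ ∫ t in (0 : ℝ)..1, |max (2 * m - 1 - 2 * m ^ 2 * t) (-1)| := by
  have hc : Continuous fun t : ℝ => |max (2 * m - 1 - 2 * m ^ 2 * t) (-1)| := by fun_prop
  have h0 : 0 ≤ 1 / m := by positivity
  have h1 : 1 / m ≤ 1 := by rw [div_le_one (by positivity)]; exact hm
  have hleft : 1 - 1 / m ≤
      ∫ t in (0 : ℝ)..(1 / m), |max (2 * m - 1 - 2 * m ^ 2 * t) (-1)| := by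
    rw [← integral_affine_piece m hm]
    refine intervalIntegral.integral_mono_on h0 (Continuous.intervalIntegrable (by fun_prop) _ _)
      (hc.intervalIntegrable _ _) fun t _ => ?_
    exact (le_max_left _ _).trans (le_abs_self _)
  have hright : ∫ t in (1 / m)..1, |max (2 * m - 1 - 2 * m ^ 2 * t) (-1)| = 1 - 1 / m := by
    have : ∫ _ in (1 / m)..1, (1 : ℝ) = 1 - 1 / m := by simp
    rw [← this]
    refine intervalIntegral.integral_congr fun t ht => ?_
    rw [uIcc_of_le h1] at ht
    simp only [max_eq_neg_one hm ht.1, abs_neg, abs_one]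
  rw [← intervalIntegral.integral_add_adjacent_intervals (hc.intervalIntegrable 0 (1 / m))
    (hc.intervalIntegrable (1 / m) 1), hright]
  have : 2 / m = 1 / m + 1 / m := by ring
  linarith

/-- The `n`-dimensional family `φ_{n,m}(x) = φ_m(x₁)` on the open unit cube `(0,1)^n`:
convex, infimum `-1`, integral zero, and `∫ |φ_{n,m}| ≥ 2 - 2/m`. -/
theorem stmt_9 (n m : ℕ) (hn : 1 ≤ n) (hm : 1 ≤ m)
    (C : Set (Fin n → ℝ))
    (hC : C = Set.univ.pi fun _ : Fin n => Set.Ioo (0 : ℝ) 1)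
    (φ : (Fin n → ℝ) → ℝ)
    (hφdef : φ = fun x => max (2 * (m : ℝ) - 1 - 2 * (m : ℝ) ^ 2 * x ⟨0, hn⟩) (-1)) :
    ConvexOn ℝ C φ ∧
    sInf (φ '' C) = -1 ∧
    (∫ x in C, φ x) = 0 ∧
    (∫ x in C, |φ x|) ≥ 2 - 2 / (m : ℝ) := by
  have hm' : (1 : ℝ) ≤ m := by exact_mod_cast hm
  subst hC hφdef
  have hconv : Convex ℝ (Set.univ.pi fun _ : Fin n => Set.Ioo (0 : ℝ) 1) :=
    convex_pi fun _ _ => convex_Ioo 0 1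
  refine ⟨?_, ?_, ?_, ?_⟩
  · refine ConvexOn.sup ⟨hconv, fun x _ y _ a b _ _ hab => ?_⟩ (convexOn_const (-1) hconv)
    obtain rfl : b = 1 - a := by linarith
    simp only [Pi.add_apply, Pi.smul_apply, smul_eq_mul]
    apply le_of_eq
    ring
  · refine IsGLB.csInf_eq ⟨?_, fun c hc => ?_⟩
      ⟨_, mem_image_of_mem _ (show (fun _ => 1 / 2 : Fin n → ℝ) ∈ _ from
        fun _ _ => by constructor <;> norm_num)⟩
    · rintro _ ⟨x, _, rfl⟩
      exact le_max_right _ _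
    · refine le_of_forall_pos_le_add fun ε hε => ?_
      -- At `t = 1 - δ / (2m²)` the affine branch is `2m - 2m² - 1 + δ ≤ -1 + δ`.
      set δ := min ε 1 with hδ
      have hδ0 : 0 < δ := lt_min hε one_pos
      have hδ1 : δ ≤ 1 := min_le_right _ _
      have hδε : δ ≤ ε := min_le_left _ _
      have hq : δ / (2 * (m : ℝ) ^ 2) < 1 := by
        rw [div_lt_one (by positivity)]
        nlinarith
      have hq0 : 0 < δ / (2 * (m : ℝ) ^ 2) := by positivity
      refine (hc (mem_image_of_mem _ (show (fun _ => 1 - δ / (2 * (m : ℝ) ^ 2) : Fin n → ℝ) ∈ _ from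
        fun _ _ => ⟨by linarith, by linarith⟩))).trans (max_le ?_ (by linarith))
      have : 2 * (m : ℝ) ^ 2 * (1 - δ / (2 * (m : ℝ) ^ 2)) = 2 * (m : ℝ) ^ 2 - δ := by
        field_simp
      simp only [this]
      nlinarith
  · exact (integral_cube_eq n ⟨0, hn⟩ (fun t => max (2 * (m : ℝ) - 1 - 2 * (m : ℝ) ^ 2 * t) (-1))
      (by fun_prop)).trans (integral_max_eq_zero m hm')
  · exact (le_integral_abs_max m hm').trans_eq (integral_cube_eq n ⟨0, hn⟩
      (fun t => |max (2 * (m : ℝ) - 1 - 2 * (m : ℝ) ^ 2 * t) (-1)|) (by fun_prop)).symm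
end

section
/- Let n ≥ 1 and let P := (0,1)^n ⊆ ℝ^n. Then the supremum, over all convex Lebesgue-integrable functions φ : P → ℝ with ∫_P φ dμ = 0 and inf_P φ < 0, of the ratio (∫_P |φ| dμ) / (−μ(P) · inf_P φ), equals 2 (and the supremum is not attained for this P, being approached by the family φ_{n,m} as m → ∞). -/
/-!
The upper bound is elementary. If `m = -inf φ > 0`, then `|φ| ≤ φ + 2 m` pointwise on `P`, and
integrating gives `∫ |φ| ≤ 2 m`. Equality would force `|φ| = φ + 2 m`, i.e. `φ = -m`, almost
everywhere, contradicting `∫ φ = 0`.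

For sharpness take `φ_k x = (k² + 1) x₀ ^ (k²) - 1`, a convex centered function of one coordinate
with `-1 ≤ inf φ_k < 0`. Testing `φ_k` against the weight `2 x₀ ^ k - 1 ∈ [-1, 1]` gives
`∫ |φ_k| ≥ ∫ φ_k (2 x₀ ^ k - 1) = 2 ((k² + 1) / (k² + k + 1) - 1 / (k + 1)) ≥ 2 (1 - 2 / (k + 1))`,
which tends to `2`.
-/

open MeasureTheory Set

lemma integral_cube_coord {n : ℕ} (i : Fin n) (f : ℝ → ℝ) (hf : Continuous f) :
    ∫ x in (Set.univ.pi fun _ : Fin n => Set.Ioo (0 : ℝ) 1), f (x i)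
      = ∫ t in (0 : ℝ)..1, f t := by
  have : IsProbabilityMeasure ((volume : Measure ℝ).restrict (Ioo 0 1)) := ⟨by simp⟩
  rw [volume_pi, Measure.restrict_pi_pi]
  have h := measurePreserving_eval
    (fun _ : Fin n => (volume : Measure ℝ).restrict (Ioo (0 : ℝ) 1)) i
  have h2 := integral_map (μ := Measure.pi fun _ : Fin n => volume.restrict (Ioo (0 : ℝ) 1))
    h.measurable.aemeasurable (hf.aestronglyMeasurable (μ := Measure.map _ _))
  rw [h.map_eq] at h2
  rw [intervalIntegral.integral_of_le zero_le_one, integral_Ioc_eq_integral_Ioo, h2]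

lemma integrableOn_cube {n : ℕ} (g : (Fin n → ℝ) → ℝ) (hg : Continuous g) :
    IntegrableOn g (Set.univ.pi fun _ : Fin n => Set.Ioo (0 : ℝ) 1) volume := by
  have hc : IsCompact (Set.univ.pi fun _ : Fin n => Set.Icc (0 : ℝ) 1) :=
    isCompact_univ_pi fun _ => isCompact_Icc
  exact (hg.continuousOn.integrableOn_compact hc).mono_set
    (Set.pi_mono fun _ _ => Ioo_subset_Icc_self)

lemma volume_cube (n : ℕ) :
    volume (Set.univ.pi fun _ : Fin n => Set.Ioo (0 : ℝ) 1) = 1 := by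
  simp [volume_pi, Measure.pi_pi]

/-- Bound and strictness together: `|φ| ≤ φ + 2 m` almost everywhere, and equality of the integrals
would make `φ` almost everywhere equal to `-m`. -/
lemma integral_abs_lt {α : Type*} [MeasurableSpace α] (μ : Measure α) [IsProbabilityMeasure μ]
    (φ : α → ℝ) (m : ℝ) (hm : 0 < m) (hi : Integrable φ μ) (h0 : ∫ x, φ x ∂μ = 0)
    (hle : ∀ᵐ x ∂μ, -m ≤ φ x) : ∫ x, |φ x| ∂μ < 2 * m := by
  have hpt : ∀ᵐ x ∂μ, 0 ≤ φ x + 2 * m - |φ x| := by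
    filter_upwards [hle] with x hx
    rcases abs_cases (φ x) with h | h <;> linarith
  have hint : Integrable (fun x => φ x + 2 * m - |φ x|) μ :=
    (hi.add (integrable_const _)).sub hi.abs
  have hval : ∫ x, (φ x + 2 * m - |φ x|) ∂μ = 2 * m - ∫ x, |φ x| ∂μ := by
    have hadd : Integrable (fun x => φ x + 2 * m) μ := hi.add (integrable_const _)
    rw [integral_sub hadd hi.abs, integral_add hi (integrable_const _), h0]
    simp
  have hnn : 0 ≤ ∫ x, (φ x + 2 * m - |φ x|) ∂μ := integral_nonneg_of_ae hpt
  refine lt_of_le_of_ne (by linarith) fun heq => ?_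
  have hz : ∫ x, (φ x + 2 * m - |φ x|) ∂μ = 0 := by rw [hval, heq]; ring
  rw [integral_eq_zero_iff_of_nonneg_ae hpt hint] at hz
  have hφ : φ =ᵐ[μ] fun _ => -m := by
    filter_upwards [hz] with x hx
    simp only [Pi.zero_apply] at hx
    rcases abs_cases (φ x) with h | h <;> linarith
  rw [integral_congr_ae hφ] at h0
  simp at h0
  linarith

lemma ratio_lt_two {n : ℕ} (φ : (Fin n → ℝ) → ℝ) (P : Set (Fin n → ℝ))
    (hP : P = Set.univ.pi fun _ : Fin n => Set.Ioo (0 : ℝ) 1)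
    (hi : IntegrableOn φ P volume) (h0 : (∫ x in P, φ x) = 0) (hneg : sInf (φ '' P) < 0) :
    (∫ x in P, |φ x|) / (-((volume P).toReal * sInf (φ '' P))) < 2 := by
  have hv : volume P = 1 := hP ▸ volume_cube n
  have hmeas : MeasurableSet P := hP ▸ MeasurableSet.univ_pi fun _ => measurableSet_Ioo
  have : IsProbabilityMeasure (volume.restrict P) := ⟨by simp [hv]⟩
  -- `sInf` of a set that is not bounded below is `0`, so negativity yields boundedness.
  have hb : BddBelow (φ '' P) := by
    by_contra h
    rw [Real.sInf_of_not_bddBelow h] at hneg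
    exact lt_irrefl _ hneg
  have h := integral_abs_lt (volume.restrict P) φ (-sInf (φ '' P)) (by linarith) hi h0
    (by
      filter_upwards [ae_restrict_mem hmeas] with x hx
      rw [neg_neg]
      exact csInf_le hb (mem_image_of_mem _ hx))
  rw [hv, div_lt_iff₀ (by simpa using hneg)]
  simpa using h

lemma integral_unit_affine_pow (m : ℕ) :
    ∫ t in (0 : ℝ)..1, (((m : ℝ) + 1) * t ^ m - 1) = 0 := by
  rw [intervalIntegral.integral_sub (Continuous.intervalIntegrable (by fun_prop) _ _)
    (by simp), intervalIntegral.integral_const_mul, integral_pow]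
  have : (m : ℝ) + 1 ≠ 0 := by positivity
  simp [this]

lemma integral_unit_weighted (m k : ℕ) :
    ∫ t in (0 : ℝ)..1, (((m : ℝ) + 1) * t ^ m - 1) * (2 * t ^ k - 1)
      = 2 * (((m : ℝ) + 1) / (m + k + 1) - 1 / (k + 1)) := by
  have he : ∀ t : ℝ, (((m : ℝ) + 1) * t ^ m - 1) * (2 * t ^ k - 1)
      = (2 * ((m : ℝ) + 1)) * t ^ (m + k) - 2 * t ^ k - (((m : ℝ) + 1) * t ^ m - 1) := by
    intro t; rw [pow_add]; ring
  simp_rw [he]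
  rw [intervalIntegral.integral_sub (Continuous.intervalIntegrable (by fun_prop) _ _)
    (Continuous.intervalIntegrable (by fun_prop) _ _), integral_unit_affine_pow,
    intervalIntegral.integral_sub (Continuous.intervalIntegrable (by fun_prop) _ _)
    (Continuous.intervalIntegrable (by fun_prop) _ _), intervalIntegral.integral_const_mul,
    intervalIntegral.integral_const_mul, integral_pow, integral_pow]
  push_cast
  simp
  ring

/-- The extremal family: the exponent `k ^ 2` beats the exponent `k` of the test weight, so the
mass of `φ` concentrates at `x i = 1` faster than the weight departs from `-1`. -/
lemma exists_ratio_ge {n : ℕ} (i : Fin n) (P : Set (Fin n → ℝ))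
    (hP : P = Set.univ.pi fun _ : Fin n => Set.Ioo (0 : ℝ) 1) (k : ℕ) (hk : 1 ≤ k) :
    ∃ φ : (Fin n → ℝ) → ℝ,
      ConvexOn ℝ P φ ∧ IntegrableOn φ P volume ∧ (∫ x in P, φ x) = 0 ∧
      sInf (φ '' P) < 0 ∧
      2 * (1 - 2 / ((k : ℝ) + 1))
        ≤ (∫ x in P, |φ x|) / (-((volume P).toReal * sInf (φ '' P))) := by
  obtain ⟨m, hmk⟩ : ∃ m : ℕ, m = k ^ 2 := ⟨_, rfl⟩
  have hm : 1 ≤ m := by rw [hmk]; exact Nat.one_le_pow _ _ hk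
  have hv : volume P = 1 := hP ▸ volume_cube n
  have hmeas : MeasurableSet P := hP ▸ MeasurableSet.univ_pi fun _ => measurableSet_Ioo
  have hmem : ∀ x ∈ P, ∀ j, x j ∈ Ioo (0 : ℝ) 1 := by
    intro x hx j
    rw [hP] at hx
    exact hx j (mem_univ j)
  have hconvP : Convex ℝ P := hP ▸ convex_pi fun _ _ => convex_Ioo _ _
  set φ : (Fin n → ℝ) → ℝ := fun x => ((m : ℝ) + 1) * x i ^ m - 1 with hφ
  have hφc : Continuous φ := by fun_prop
  have hlb : ∀ y ∈ φ '' P, -1 ≤ y := by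
    rintro _ ⟨x, hx, rfl⟩
    have : 0 ≤ x i ^ m := pow_nonneg (hmem x hx i).1.le _
    have : 0 ≤ ((m : ℝ) + 1) * x i ^ m := by positivity
    simp only [hφ]; linarith
  have hm2 : (0 : ℝ) < (m : ℝ) + 2 := by positivity
  -- The constant point `1 / (m + 2)` witnesses that `φ` takes a negative value.
  have hpt : (fun _ : Fin n => 1 / ((m : ℝ) + 2)) ∈ P := by
    rw [hP]
    intro j _
    refine ⟨by positivity, ?_⟩
    rw [div_lt_one hm2]
    have : (0 : ℝ) ≤ m := by positivity
    linarith
  have hneg : sInf (φ '' P) < 0 := by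
    refine lt_of_le_of_lt (csInf_le ⟨-1, hlb⟩ (mem_image_of_mem φ hpt)) ?_
    have h1 : (1 / ((m : ℝ) + 2)) ^ m ≤ 1 / ((m : ℝ) + 2) :=
      pow_le_of_le_one (by positivity) (hmem _ hpt i).2.le (by omega)
    have h2 : ((m : ℝ) + 1) * (1 / ((m : ℝ) + 2)) ^ m
        ≤ ((m : ℝ) + 1) * (1 / ((m : ℝ) + 2)) := by gcongr
    have h3 : ((m : ℝ) + 1) * (1 / ((m : ℝ) + 2)) < 1 := by
      rw [mul_one_div, div_lt_one hm2]; linarith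
    simp only [hφ]; linarith
  have hinf : -1 ≤ sInf (φ '' P) := le_csInf ⟨_, mem_image_of_mem φ hpt⟩ hlb
  have hconv : ConvexOn ℝ P φ := by
    have h1 : ConvexOn ℝ P (fun x : Fin n → ℝ => x i ^ m) :=
      ((convexOn_pow m).comp_linearMap (LinearMap.proj i : (Fin n → ℝ) →ₗ[ℝ] ℝ)).subset
        (fun x hx => (hmem x hx i).1.le) hconvP
    have h2 := (h1.smul (c := (m : ℝ) + 1) (by positivity)).add_const (-1)
    exact h2
  have hzero : (∫ x in P, φ x) = 0 := by
    rw [hP]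
    exact (integral_cube_coord i (fun t => ((m : ℝ) + 1) * t ^ m - 1) (by fun_prop)).trans
      (integral_unit_affine_pow m)
  refine ⟨φ, hconv, hP ▸ integrableOn_cube φ hφc, hzero, hneg, ?_⟩
  have hw : (∫ x in P, φ x * (2 * x i ^ k - 1))
      = 2 * (((m : ℝ) + 1) / (m + k + 1) - 1 / (k + 1)) := by
    rw [hP, ← integral_unit_weighted m k,
      ← integral_cube_coord i (fun t => (((m : ℝ) + 1) * t ^ m - 1) * (2 * t ^ k - 1))
        (by fun_prop)]
  have hle : (∫ x in P, φ x * (2 * x i ^ k - 1)) ≤ ∫ x in P, |φ x| := by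
    refine setIntegral_mono_on (hP ▸ integrableOn_cube _ (by fun_prop))
      (hP ▸ integrableOn_cube _ (by fun_prop)) hmeas fun x hx => ?_
    have h0 : 0 ≤ x i ^ k := pow_nonneg (hmem x hx i).1.le _
    have h1 : x i ^ k ≤ 1 := pow_le_one₀ (hmem x hx i).1.le (hmem x hx i).2.le
    calc φ x * (2 * x i ^ k - 1) ≤ |φ x * (2 * x i ^ k - 1)| := le_abs_self _
      _ = |φ x| * |2 * x i ^ k - 1| := abs_mul _ _
      _ ≤ |φ x| * 1 := by
        gcongr
        rw [abs_le]; constructor <;> linarith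
      _ = |φ x| := mul_one _
  have hnum : 1 - 2 / ((k : ℝ) + 1) ≤ ((m : ℝ) + 1) / (m + k + 1) - 1 / (k + 1) := by
    have hkm : (m : ℝ) = (k : ℝ) ^ 2 := by rw [hmk]; push_cast; rfl
    have hk0 : (0 : ℝ) ≤ k := by positivity
    have e : ((m : ℝ) + 1) / (m + k + 1) - 1 / (k + 1) - (1 - 2 / ((k : ℝ) + 1))
        = 1 / (((k : ℝ) ^ 2 + k + 1) * (k + 1)) := by
      rw [hkm]; field_simp; ring
    have : (0 : ℝ) ≤ 1 / (((k : ℝ) ^ 2 + k + 1) * (k + 1)) := by positivity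
    linarith
  have habs : 0 ≤ ∫ x in P, |φ x| := integral_nonneg fun x => abs_nonneg _
  rw [hv, ENNReal.toReal_one, one_mul]
  calc 2 * (1 - 2 / ((k : ℝ) + 1)) ≤ ∫ x in P, |φ x| := by linarith
    _ ≤ (∫ x in P, |φ x|) / (-sInf (φ '' P)) :=
      le_div_self habs (by linarith) (by linarith)

/-- On the open unit cube `P = (0,1)^n`, the supremum of the ratios
`(∫_P |φ|)/(-μ(P) inf_P φ)` over all centered convex integrable `φ` with negative infimum
equals `2`, and it is not attained. -/
theorem stmt_10 (n : ℕ) (hn : 1 ≤ n)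
    (P : Set (Fin n → ℝ))
    (hP : P = Set.univ.pi fun _ : Fin n => Set.Ioo (0 : ℝ) 1)
    (S : Set ℝ)
    (hS : S = {r : ℝ | ∃ φ : (Fin n → ℝ) → ℝ,
      ConvexOn ℝ P φ ∧ IntegrableOn φ P volume ∧ (∫ x in P, φ x) = 0 ∧
      sInf (φ '' P) < 0 ∧
      r = (∫ x in P, |φ x|) / (-((volume P).toReal * sInf (φ '' P)))}) :
    IsLUB S 2 ∧ 2 ∉ S := by
  have hlt : ∀ r ∈ S, r < 2 := by
    intro r hr
    rw [hS] at hr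
    obtain ⟨φ, -, hi, h0, hneg, rfl⟩ := hr
    exact ratio_lt_two φ P hP hi h0 hneg
  refine ⟨⟨fun r hr => (hlt r hr).le, fun b hb => ?_⟩, fun h => lt_irrefl _ (hlt 2 h)⟩
  have hlim : Filter.Tendsto (fun k : ℕ => 2 * (1 - 2 * (1 / ((k : ℝ) + 1))))
      Filter.atTop (nhds (2 * (1 - 2 * 0))) :=
    ((tendsto_one_div_add_atTop_nhds_zero_nat.const_mul 2).const_sub 1).const_mul 2
  rw [mul_zero, sub_zero, mul_one] at hlim
  refine le_of_tendsto hlim ?_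
  filter_upwards [Filter.eventually_ge_atTop 1] with k hk
  obtain ⟨φ, h1, h2, h3, h4, h5⟩ := exists_ratio_ge ⟨0, hn⟩ P hP k hk
  rw [mul_one_div]
  refine h5.trans (hb ?_)
  rw [hS]
  exact ⟨φ, h1, h2, h3, h4, rfl⟩
end
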